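/- Let P, I, C be n×n matrices with entries in ℝ ∪ {-∞} such that P_{jj} ≠ -∞ for every index j, and let λ ∈ ℝ. Over the three-letter alphabet Σ = {p, i, c} with μ(p) = P, μ(i) = I, μ(c) = C, let 𝒫 = {c}^* · {p} · {c}^*, ℐ = {c}^* · {i} · {c}^*, and S = S(𝒫, ℐ, ⌊n/2⌋). Then G(λP ⊕ λ^{-1}I ⊕ C) ∈ Γ if and only if G(C) ∈ Γ and mcm(μ(ℐ · S^*)) ≤ λ ≤ -mcm(μ(𝒫 · S^*)), where the inequalities are between extended reals and the negation satisfies -(+∞) = -∞ and -(-∞) = +∞. -/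

import Mathlib

open scoped Classical

namespace NCP

/-- Square max-plus matrices over the extended reals. -/
abbrev MPMat (n : ℕ) := Fin n → Fin n → EReal

/-- Max-plus matrix product: `(A ⊗ B) i j = ⨆ k, A i k + B k j`. -/
noncomputable def mpMul {n : ℕ} (A B : MPMat n) : MPMat n :=
  fun i j => ⨆ k : Fin n, A i k + B k j

/-- Max-plus identity matrix `E_⊗`. -/
noncomputable def mpId {n : ℕ} : MPMat n :=
  fun i j => if i = j then 0 else ⊥

/-- Max-plus matrix powers. -/
noncomputable def mpPow {n : ℕ} (A : MPMat n) : ℕ → MPMat n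
  | 0 => mpId
  | k + 1 => mpMul A (mpPow A k)

/-- Entrywise Kleene star `(A^*) i j = ⨆ k, (A^k) i j`. -/
noncomputable def mpStar {n : ℕ} (A : MPMat n) : MPMat n :=
  fun i j => ⨆ k : ℕ, mpPow A k i j

/-- Entrywise max of two matrices, `A ⊕ B`. -/
noncomputable def mpAdd {n : ℕ} (A B : MPMat n) : MPMat n :=
  fun i j => max (A i j) (B i j)

/-- `G(A) ∈ Γ`: all diagonal entries of all positive powers are ≤ 0. -/
def InGamma {n : ℕ} (A : MPMat n) : Prop :=
  ∀ i : Fin n, ∀ k : ℕ, 1 ≤ k → mpPow A k i i ≤ 0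

/-- `λA`: the matrix with entries `λ + A i j`. -/
noncomputable def sm {n : ℕ} (lam : ℝ) (A : MPMat n) : MPMat n :=
  fun i j => (lam : EReal) + A i j

/-- Division of an extended real by a natural number (±∞ map to ±∞). -/
noncomputable def edivNat (x : EReal) (k : ℕ) : EReal :=
  if x = ⊤ then ⊤ else if x = ⊥ then ⊥ else ((x.toReal / k : ℝ) : EReal)

/-- The maximum circuit mean of a max-plus matrix. -/
noncomputable def mcm {n : ℕ} (M : MPMat n) : EReal :=
  ⨆ k ∈ Finset.Icc 1 n, ⨆ i : Fin n, edivNat (mpPow M k i i) k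

/-- Morphism from words to max-plus matrices determined by `f` on letters. -/
noncomputable def wordMat {α : Type*} {n : ℕ} (f : α → MPMat n) : List α → MPMat n
  | [] => mpId
  | z :: s => mpMul (f z) (wordMat f s)

/-- Entrywise extension of `wordMat` to languages: `μ(L) i j = ⨆ s ∈ L, μ(s) i j`. -/
noncomputable def langMat {α : Type*} {n : ℕ} (f : α → MPMat n) (L : Language α) : MPMat n :=
  fun i j => ⨆ s ∈ L, wordMat f s i j

/-- The recursive sequence of languages `S(L₁, L₂, k)`. -/
def SL {α : Type*} (L1 L2 : Language α) : ℕ → Language α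
  | 0 => 1
  | k + 1 => L1 * SL L1 L2 k * SL L1 L2 k * L2 + L2 * SL L1 L2 k * SL L1 L2 k * L1 + 1


/-- The matrix `λP ⊕ λ⁻¹I ⊕ C`. -/
noncomputable def picMat {n : ℕ} (P I C : MPMat n) (lam : ℝ) : MPMat n :=
  fun i j => max (max ((lam : EReal) + P i j) (((-lam : ℝ) : EReal) + I i j)) (C i j)

/-- The solution set `Λ(P, I, C)` of the PIC non-positive circuit problem. -/
noncomputable def Lambda {n : ℕ} (P I C : MPMat n) : Set ℝ :=
  {lam : ℝ | InGamma (picMat P I C lam)}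

/-- The morphism on the three-letter alphabet `{p, i, c}` (encoded as `Fin 3` with
`p = 0`, `i = 1`, `c = 2`) sending `p` to `P`, `i` to `I` and `c` to `C`. -/
noncomputable def mu3 {n : ℕ} (P I C : MPMat n) : Fin 3 → MPMat n := ![P, I, C]

/-- The language `𝒫 = {c}^* · {p} · {c}^*` over `{p, i, c}`. -/
def langP : Language (Fin 3) :=
  KStar.kstar ({[(2 : Fin 3)]} : Language (Fin 3)) * ({[(0 : Fin 3)]} : Language (Fin 3)) *
    KStar.kstar ({[(2 : Fin 3)]} : Language (Fin 3))

/-- The language `ℐ = {c}^* · {i} · {c}^*` over `{p, i, c}`. -/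
def langI : Language (Fin 3) :=
  KStar.kstar ({[(2 : Fin 3)]} : Language (Fin 3)) * ({[(1 : Fin 3)]} : Language (Fin 3)) *
    KStar.kstar ({[(2 : Fin 3)]} : Language (Fin 3))

theorem isup_add {ι : Sort*} (f : ι → EReal) (x : EReal) : (⨆ k, f k) + x = ⨆ k, f k + x := by
  apply le_antisymm
  · apply EReal.add_le_of_forall_lt
    intro a ha b hb
    obtain ⟨k, hk⟩ := lt_iSup_iff.1 ha
    exact (add_le_add hk.le hb.le).trans (le_iSup (fun k => f k + x) k)
  · exact iSup_le fun k => add_le_add (le_iSup f k) le_rfl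

theorem add_isup {ι : Sort*} (f : ι → EReal) (x : EReal) : x + (⨆ k, f k) = ⨆ k, x + f k := by
  rw [add_comm, isup_add]; simp_rw [add_comm]

theorem mpMul_assoc {n : ℕ} (A B C : MPMat n) : mpMul (mpMul A B) C = mpMul A (mpMul B C) := by
  funext i j
  simp only [mpMul, isup_add, add_isup]
  rw [iSup_comm]
  simp_rw [add_assoc]

theorem mpId_mul {n : ℕ} (A : MPMat n) : mpMul mpId A = A := by
  funext i j
  apply le_antisymm
  · refine iSup_le fun k => ?_
    by_cases h : i = k
    · subst h; simp [mpId]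
    · simp [mpId, h]
  · refine le_trans ?_ (le_iSup _ i)
    simp [mpId]

theorem mpMul_id {n : ℕ} (A : MPMat n) : mpMul A mpId = A := by
  funext i j
  apply le_antisymm
  · refine iSup_le fun k => ?_
    by_cases h : k = j
    · subst h; simp [mpId]
    · simp [mpId, h]
  · refine le_trans ?_ (le_iSup _ j)
    simp [mpId]

theorem le_mpMul {n : ℕ} (A B : MPMat n) (i k j : Fin n) : A i k + B k j ≤ mpMul A B i j :=
  le_iSup (fun k => A i k + B k j) k

theorem mpPow_add {n : ℕ} (A : MPMat n) (a b : ℕ) :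
    mpPow A (a + b) = mpMul (mpPow A a) (mpPow A b) := by
  induction a with
  | zero => simp [mpPow, mpId_mul]
  | succ a ih => rw [Nat.succ_add, mpPow, ih, mpPow, mpMul_assoc]

theorem wordMat_append {α : Type*} {n : ℕ} (f : α → MPMat n) (u v : List α) :
    wordMat f (u ++ v) = mpMul (wordMat f u) (wordMat f v) := by
  induction u with
  | nil => simp [wordMat, mpId_mul]
  | cons a u ih => rw [List.cons_append, wordMat, ih, wordMat, mpMul_assoc]

theorem langMat_mul {α : Type*} {n : ℕ} (f : α → MPMat n) (L M : Language α) :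
    langMat f (L * M) = mpMul (langMat f L) (langMat f M) := by
  funext i j
  apply le_antisymm
  · refine iSup₂_le fun s hs => ?_
    obtain ⟨a, ha, b, hb, rfl⟩ := Language.mem_mul.1 hs
    rw [wordMat_append]
    refine iSup_le fun k => ?_
    refine le_trans (add_le_add ?_ ?_) (le_mpMul _ _ i k j)
    · exact le_iSup₂ (f := fun s (_ : s ∈ L) => wordMat f s i k) a ha
    · exact le_iSup₂ (f := fun s (_ : s ∈ M) => wordMat f s k j) b hb
  · refine iSup_le fun k => ?_
    simp only [langMat, isup_add, add_isup]
    refine iSup₂_le fun b hb => iSup₂_le fun a ha => ?_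
    refine le_trans ?_ (le_iSup₂ (f := fun s (_ : s ∈ L * M) => wordMat f s i j) (_ ++ _)
      (Language.append_mem_mul (by assumption) (by assumption)))
    rw [wordMat_append]
    exact le_mpMul _ _ i k j

theorem langMat_one {α : Type*} {n : ℕ} (f : α → MPMat n) :
    langMat f (1 : Language α) = mpId := by
  funext i j
  apply le_antisymm
  · refine iSup₂_le fun s hs => ?_
    rw [Language.mem_one] at hs
    subst hs
    exact le_rfl
  · exact le_iSup₂ (f := fun s (_ : s ∈ (1 : Language α)) => wordMat f s i j) [] rfl

theorem langMat_pow {α : Type*} {n : ℕ} (f : α → MPMat n) (L : Language α) (k : ℕ) :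
    langMat f (L ^ k) = mpPow (langMat f L) k := by
  induction k with
  | zero => rw [pow_zero, langMat_one]; rfl
  | succ k ih => rw [pow_succ', langMat_mul, ih]; rfl

theorem le_langMat {α : Type*} {n : ℕ} (f : α → MPMat n) (L : Language α) {w : List α}
    (hw : w ∈ L) (i j : Fin n) : wordMat f w i j ≤ langMat f L i j :=
  le_iSup₂ (f := fun s (_ : s ∈ L) => wordMat f s i j) w hw

theorem rotate_le {α : Type*} {n : ℕ} (f : α → MPMat n) (u v : List α) (c : EReal)
    (h : ∀ j, wordMat f (v ++ u) j j ≤ c) (i : Fin n) : wordMat f (u ++ v) i i ≤ c := by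
  rw [wordMat_append]
  refine iSup_le fun k => ?_
  refine le_trans ?_ (h k)
  rw [wordMat_append, add_comm]
  exact le_mpMul _ _ k i k

/-- existence of an optimal walk -/
theorem exists_walk {n : ℕ} (A : MPMat n) (k : ℕ) : ∀ i j, mpPow A k i j ≠ ⊥ →
    ∃ v : ℕ → Fin n, v 0 = i ∧ v k = j ∧
      mpPow A k i j ≤ ∑ t ∈ Finset.range k, A (v t) (v (t + 1)) := by
  induction k with
  | zero =>
    intro i j h
    by_cases hij : i = j
    · exact ⟨fun _ => i, rfl, hij, by simp [mpPow, mpId, hij]⟩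
    · simp [mpPow, mpId, hij] at h
  | succ k ih =>
    intro i j h
    have : Nonempty (Fin n) := ⟨i⟩
    obtain ⟨m, hm⟩ := exists_eq_ciSup_of_finite (f := fun m => A i m + mpPow A k m j)
    have e : mpPow A (k + 1) i j = A i m + mpPow A k m j := hm.symm
    rw [e] at h ⊢
    have h2 : mpPow A k m j ≠ ⊥ := by
      intro h3; rw [h3] at h; simp at h
    obtain ⟨v, h0, hk, hv⟩ := ih m j h2
    refine ⟨fun t => Nat.casesOn t i v, rfl, hk, ?_⟩
    rw [Finset.sum_range_succ', add_comm]
    refine add_le_add hv ?_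
    simp [h0]

theorem walk_le {n : ℕ} (A : MPMat n) (v : ℕ → Fin n) (a m : ℕ) :
    ∑ t ∈ Finset.range m, A (v (a + t)) (v (a + t + 1)) ≤ mpPow A m (v a) (v (a + m)) := by
  induction m generalizing a with
  | zero => simp [mpPow, mpId]
  | succ m ih =>
    rw [Finset.sum_range_succ', add_comm]
    refine le_trans (add_le_add le_rfl ?_) (le_mpMul _ _ (v a) (v (a + 1)) _)
    have := ih (a + 1)
    simp only [add_assoc, add_comm, add_left_comm] at this ⊢
    exact this

theorem inGamma_of_short {n : ℕ} (A : MPMat n)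
    (h : ∀ i : Fin n, ∀ k : ℕ, 1 ≤ k → k ≤ n → mpPow A k i i ≤ 0) : InGamma A := by
  intro i k
  induction k using Nat.strong_induction_on generalizing i with
  | _ k ih =>
    intro hk
    by_cases hkn : k ≤ n
    · exact h i k hk hkn
    by_cases hb : mpPow A k i i = ⊥
    · rw [hb]; exact bot_le
    obtain ⟨v, h0, hvk, hv⟩ := exists_walk A k i i hb
    obtain ⟨x, y, hxy, hvxy⟩ := Fintype.exists_ne_map_eq_of_card_lt
      (fun t : Fin (n + 1) => v t) (by simp)
    obtain ⟨a, b, hab, hbn, hvab⟩ : ∃ a b : ℕ, a < b ∧ b ≤ n ∧ v a = v b := by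
      rcases lt_or_gt_of_ne hxy with h | h
      · exact ⟨x, y, h, by omega, hvxy⟩
      · exact ⟨y, x, h, by omega, hvxy.symm⟩
    refine hv.trans ?_
    obtain ⟨d, rfl⟩ := Nat.exists_eq_add_of_le hab.le
    obtain ⟨c, rfl⟩ := Nat.exists_eq_add_of_le (show a + d ≤ k by omega)
    rw [Finset.sum_range_add, Finset.sum_range_add]
    have e1 := walk_le A v 0 a
    have e2 := walk_le A v a d
    have e3 := walk_le A v (a + d) c
    simp only [zero_add] at e1
    rw [← hvab] at e2
    rw [hvk, ← hvab] at e3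
    rw [h0] at e1
    refine (add_le_add (add_le_add e1 (e2.trans (h _ d (by omega) (by omega)))) e3).trans ?_
    rw [add_zero]
    refine (le_mpMul _ _ i (v a) i).trans ?_
    rw [← mpPow_add]
    exact ih (a + c) (by omega) i (by omega)

theorem edivNat_le {x : EReal} {k : ℕ} (hk : 1 ≤ k) (r : ℝ) :
    edivNat x k ≤ (r : EReal) ↔ x ≤ ((k * r : ℝ) : EReal) := by
  have hk' : (0 : ℝ) < k := by exact_mod_cast hk
  induction x with
  | bot => simp [edivNat]
  | top => simp only [edivNat, if_true, top_le_iff]; exact ⟨fun h => absurd h (EReal.coe_ne_top _), fun h => absurd h (EReal.coe_ne_top _)⟩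
  | coe x =>
    simp only [edivNat, EReal.coe_ne_top, EReal.coe_ne_bot, if_false, EReal.toReal_coe,
      EReal.coe_le_coe_iff]
    rw [div_le_iff₀ hk', mul_comm]

theorem mcm_le {n : ℕ} (M : MPMat n) (r : ℝ) :
    mcm M ≤ (r : EReal) ↔
      ∀ k : ℕ, 1 ≤ k → k ≤ n → ∀ i, mpPow M k i i ≤ ((k * r : ℝ) : EReal) := by
  unfold mcm
  rw [iSup₂_le_iff]
  constructor
  · intro h k hk hkn i
    exact (edivNat_le hk r).1 ((le_iSup _ i).trans (h k (Finset.mem_Icc.2 ⟨hk, hkn⟩)))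
  · intro h k hk
    rw [Finset.mem_Icc] at hk
    exact iSup_le fun i => (edivNat_le hk.1 r).2 (h k hk.1 hk.2 i)

/-- signs of letters -/
def sgn : Fin 3 → ℤ := ![1, -1, 0]

/-- height of a word -/
def ht (w : List (Fin 3)) : ℤ := (w.map sgn).sum

theorem ht_append (u v : List (Fin 3)) : ht (u ++ v) = ht u + ht v := by simp [ht]

noncomputable def gm {n : ℕ} (f : Fin 3 → MPMat n) (lam : ℝ) : Fin 3 → MPMat n :=
  fun z i j => ((lam * sgn z : ℝ) : EReal) + f z i j

theorem wordMat_gm {n : ℕ} (f : Fin 3 → MPMat n) (lam : ℝ) (w : List (Fin 3)) (i j : Fin n) :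
    wordMat (gm f lam) w i j = ((lam * ht w : ℝ) : EReal) + wordMat f w i j := by
  induction w generalizing i with
  | nil => simp [wordMat, ht]
  | cons a w ih =>
    simp only [wordMat, mpMul, ih, gm, add_isup]
    refine iSup_congr fun k => ?_
    have : ((lam * (ht (a :: w) : ℤ) : ℝ) : EReal)
        = ((lam * sgn a : ℝ) : EReal) + ((lam * ht w : ℝ) : EReal) := by
      rw [← EReal.coe_add]; congr 1; simp [ht]; ring
    rw [this]
    exact add_add_add_comm _ _ _ _

def letters : Language (Fin 3) := {w | w.length = 1}

theorem mem_letters_pow (k : ℕ) (w : List (Fin 3)) : w ∈ letters ^ k ↔ w.length = k := by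
  induction k generalizing w with
  | zero => rw [pow_zero, Language.mem_one]; simp
  | succ k ih =>
    rw [pow_succ', Language.mem_mul]
    constructor
    · rintro ⟨a, ha, b, hb, rfl⟩
      rw [ih] at hb
      have : a.length = 1 := ha
      simp [this, hb]; omega
    · intro h
      match w, h with
      | a :: w, h => exact ⟨[a], rfl, w, (ih w).2 (by simpa using h), rfl⟩

theorem pic_eq {n : ℕ} (P I C : MPMat n) (lam : ℝ) :
    picMat P I C lam = langMat (gm (mu3 P I C) lam) letters := by
  funext i j
  have key : ∀ z : Fin 3, wordMat (gm (mu3 P I C) lam) [z] i j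
      = ((lam * sgn z : ℝ) : EReal) + mu3 P I C z i j := by
    intro z; simp only [wordMat, mpMul_id]; rfl
  have k0 := key 0
  have k1 := key 1
  have k2 := key 2
  simp [sgn, mu3] at k0 k1 k2
  apply le_antisymm
  · refine max_le (max_le ?_ ?_) ?_
    · rw [← k0]; exact le_langMat _ letters (w := [0]) rfl i j
    · rw [EReal.coe_neg, ← k1]; exact le_langMat _ letters (w := [1]) rfl i j
    · rw [← k2]; exact le_langMat _ letters (w := [2]) rfl i j
  · refine iSup₂_le fun w hw => ?_
    obtain ⟨z, rfl⟩ := List.length_eq_one_iff.1 (show w.length = 1 from hw)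
    fin_cases z
    · show wordMat _ [0] i j ≤ _
      refine (le_of_eq k0).trans ?_; exact (le_max_left _ _).trans (le_max_left _ _)
    · show wordMat _ [1] i j ≤ _
      refine (le_of_eq k1).trans ?_; rw [← EReal.coe_neg]; exact (le_max_right _ _).trans (le_max_left _ _)
    · show wordMat _ [2] i j ≤ _
      refine (le_of_eq k2).trans ?_; exact le_max_right _ _

theorem coe_add_le_zero (r : ℝ) (x : EReal) : (r : EReal) + x ≤ 0 ↔ x ≤ ((-r : ℝ) : EReal) := by
  induction x with
  | bot => simp
  | top => simp only [EReal.coe_add_top, top_le_iff]; exact ⟨fun h => absurd h (by simp), fun h => absurd h (EReal.coe_ne_top _)⟩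
  | coe x => norm_cast; constructor <;> intro h <;> linarith

theorem pic_gamma_words {n : ℕ} {P I C : MPMat n} {lam : ℝ} (h : InGamma (picMat P I C lam))
    (w : List (Fin 3)) (hw : w ≠ []) (i : Fin n) :
    wordMat (mu3 P I C) w i i ≤ ((-(lam * ht w) : ℝ) : EReal) := by
  have := h i w.length (List.length_pos_of_ne_nil hw)
  rw [pic_eq, ← langMat_pow] at this
  have h2 := (le_langMat _ _ ((mem_letters_pow _ w).2 rfl) i i).trans this
  rwa [wordMat_gm, coe_add_le_zero] at h2

theorem pic_gamma_of_words {n : ℕ} {P I C : MPMat n} {lam : ℝ}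
    (h : ∀ w : List (Fin 3), w ≠ [] → w.length ≤ n → ∀ i : Fin n,
      wordMat (mu3 P I C) w i i ≤ ((-(lam * ht w) : ℝ) : EReal)) :
    InGamma (picMat P I C lam) := by
  apply inGamma_of_short
  intro i k hk hkn
  rw [pic_eq, ← langMat_pow]
  refine iSup₂_le fun w hw => ?_
  rw [mem_letters_pow] at hw
  rw [wordMat_gm, coe_add_le_zero]
  exact h w (by rintro rfl; simp at hw; omega) (by omega) i

/-- height of a list of signed blocks, relative to the sign `e` -/
def hb {α : Type*} (e : Bool) (l : List (Bool × List α)) : ℤ :=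
  (l.map fun b => if b.1 = e then (1 : ℤ) else -1).sum

/-- the word spelled by a list of blocks -/
def fl {α : Type*} (l : List (Bool × List α)) : List α := (l.map Prod.snd).flatten

section blocks
variable {α : Type*}

theorem hb_nil (e : Bool) : hb e ([] : List (Bool × List α)) = 0 := rfl
theorem hb_cons (e : Bool) (b : Bool × List α) (l : List (Bool × List α)) :
    hb e (b :: l) = (if b.1 = e then (1 : ℤ) else -1) + hb e l := by simp [hb]
theorem hb_append (e : Bool) (l m : List (Bool × List α)) :
    hb e (l ++ m) = hb e l + hb e m := by simp [hb]
theorem hb_not (e : Bool) (l : List (Bool × List α)) : hb (!e) l = - hb e l := by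
  induction l with
  | nil => simp [hb_nil]
  | cons b l ih =>
    rw [hb_cons, hb_cons, ih]
    rcases b with ⟨x, y⟩
    cases x <;> cases e <;> simp <;> ring
theorem fl_nil : fl ([] : List (Bool × List α)) = [] := rfl
theorem fl_cons (b : Bool × List α) (l : List (Bool × List α)) : fl (b :: l) = b.2 ++ fl l := by
  simp [fl]
theorem fl_append (l m : List (Bool × List α)) : fl (l ++ m) = fl l ++ fl m := by simp [fl]

theorem first_hit (e : Bool) (l : List (Bool × List α)) : ∀ s : ℤ, 0 ≤ s → s + hb e l < 0 →
    ∃ d x l', l = d ++ x :: l' ∧ s + hb e d = 0 ∧ x.1 ≠ e ∧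
      (d = [] ∨ ∃ d' y, d = d' ++ [y] ∧ y.1 ≠ e) := by
  induction l with
  | nil => intro s hs h; rw [hb_nil] at h; omega
  | cons z t ih =>
    intro s hs h
    rw [hb_cons] at h
    by_cases hz : s = 0 ∧ z.1 ≠ e
    · exact ⟨[], z, t, rfl, by rw [hb_nil]; omega, hz.2, Or.inl rfl⟩
    · obtain ⟨d, x, l', rfl, hd, hx, hor⟩ := ih (s + if z.1 = e then (1 : ℤ) else -1)
        (by by_cases h1 : z.1 = e
            · simp [h1]; omega
            · have : s ≠ 0 := fun h0 => hz ⟨h0, h1⟩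
              simp [h1]; omega) (by omega)
      refine ⟨z :: d, x, l', rfl, by rw [hb_cons]; omega, hx, Or.inr ?_⟩
      rcases hor with rfl | ⟨d', y, rfl, hy⟩
      · refine ⟨[], z, rfl, ?_⟩
        intro h1
        rw [hb_nil] at hd
        simp [h1] at hd
        omega
      · exact ⟨z :: d', y, rfl, hy⟩

theorem SL_succ_mem {L : Bool → Language α} {m : ℕ} (e : Bool) {x y w : List α}
    (hx : x ∈ L e) (hy : y ∈ L (!e))
    (hw : w ∈ SL (L true) (L false) m * SL (L true) (L false) m) :
    x ++ w ++ y ∈ SL (L true) (L false) (m + 1) := by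
  unfold SL
  rw [Language.mem_add, Language.mem_add, mul_assoc (L true), mul_assoc (L false)]
  left
  cases e
  · exact Or.inr (Language.append_mem_mul (Language.append_mem_mul hx hw) hy)
  · exact Or.inl (Language.append_mem_mul (Language.append_mem_mul hx hw) hy)

theorem nil_mem_SL (L M : Language α) (m : ℕ) : [] ∈ SL L M m := by
  cases m with
  | zero => exact rfl
  | succ m => exact Or.inr rfl

theorem balanced_mem (L : Bool → Language α) (m : ℕ) : ∀ l : List (Bool × List α),
    (∀ b ∈ l, b.2 ∈ L b.1) → hb true l = 0 → l.length < 2 * m + 2 →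
    fl l ∈ SL (L true) (L false) m * SL (L true) (L false) m := by
  induction m with
  | zero =>
    intro l hl h0 hlen
    match l with
    | [] => exact Language.append_mem_mul (nil_mem_SL _ _ 0) (nil_mem_SL _ _ 0)
    | [b] => rw [hb_cons, hb_nil] at h0; split_ifs at h0 <;> omega
    | _ :: _ :: _ => simp at hlen
  | succ m ih =>
    intro l hl h0 hlen
    have nice : ∀ (a b : Bool × List α) (t : List (Bool × List α)), a.2 ∈ L a.1 → b.2 ∈ L b.1 →
        a.1 ≠ b.1 → (∀ b ∈ t, b.2 ∈ L b.1) → hb true t = 0 → t.length < 2 * m + 2 →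
        fl (a :: (t ++ [b])) ∈ SL (L true) (L false) (m + 1) := by
      intro a b t ha hb hab ht h0 hlen
      have : b.1 = !a.1 := by
        revert hab; cases a.1 <;> cases b.1 <;> simp
      rw [this] at hb
      have := SL_succ_mem a.1 ha hb (ih t ht h0 hlen)
      simpa [fl_cons, fl_append, fl_nil] using this
    match l with
    | [] => exact Language.append_mem_mul (nil_mem_SL _ _ _) (nil_mem_SL _ _ _)
    | a :: t =>
      rcases List.eq_nil_or_concat t with rfl | ⟨t, b, rfl⟩
      · rw [hb_cons, hb_nil] at h0; split_ifs at h0 <;> omega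
      · rw [List.concat_eq_append] at *
        by_cases hab : a.1 = b.1
        · have h0' : hb a.1 (a :: (t ++ [b])) = 0 := by
            cases h : a.1
            · have := hb_not true (a :: (t ++ [b])); rw [h0] at this; simpa using this
            · exact h0
          rw [hb_cons, hb_append, hb_cons, hb_nil, ← hab] at h0'
          simp only [if_true] at h0'
          obtain ⟨d, x, l', rfl, hd, hx, hor⟩ := first_hit a.1 t 1 (by omega) (by omega)
          rcases hor with rfl | ⟨d', y, rfl, hy⟩
          · rw [hb_nil] at hd; omega
          have tr : ∀ q : List (Bool × List α), hb a.1 q = 0 → hb true q = 0 := by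
            intro q hq
            cases h : a.1
            · have := hb_not false q
              rw [h] at hq; rw [hq] at this; simpa using this
            · rwa [h] at hq
          rw [hb_append, hb_cons] at h0'
          rw [hb_append, hb_cons, hb_nil] at hd
          simp only [hy, hx, if_false] at h0' hd
          have hd0 : hb a.1 d' = 0 := by omega
          have hl0 : hb a.1 l' = 0 := by
            rw [hb_append, hb_cons, hb_nil] at h0'
            simp only [hy, if_false] at h0'
            omega
          have e1 := nice a y d' (hl a (by simp)) (hl y (by simp)) (Ne.symm hy)
            (fun b hb => hl b (by simp [hb])) (tr _ hd0) (by simp at hlen; omega)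
          have e2 := nice x b l' (hl x (by simp)) (hl b (by simp)) (by rw [← hab]; exact hx)
            (fun b hb => hl b (by simp [hb])) (tr _ hl0) (by simp at hlen; omega)
          have := Language.append_mem_mul e1 e2
          simpa [fl_cons, fl_append, fl_nil] using this
        · have e1 := nice a b t (hl a (by simp)) (hl b (by simp)) hab
            (fun b hb => hl b (by simp [hb]))
            (by
              rw [hb_cons, hb_append, hb_cons, hb_nil] at h0
              revert hab h0
              cases a.1 <;> cases b.1 <;> simp) (by simp at hlen; omega)
          have := Language.append_mem_mul e1 (nil_mem_SL (L true) (L false) (m + 1))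
          rwa [List.append_nil] at this

theorem mul_self_mem_kstar {M : Language α} {w : List α} (h : w ∈ M * M) :
    w ∈ KStar.kstar M := by
  obtain ⟨a, ha, b, hb, rfl⟩ := Language.mem_mul.1 h
  exact Language.mem_kstar.2 ⟨[a, b], by simp, by simp [ha, hb]⟩

theorem balanced_mem_star (L : Bool → Language α) (n : ℕ) (e : Bool) (l : List (Bool × List α))
    (hl : ∀ b ∈ l, b.2 ∈ L b.1) (h0 : hb e l = 0) (hn : l.length ≤ n) :
    fl l ∈ KStar.kstar (SL (L true) (L false) (n / 2)) := by
  refine mul_self_mem_kstar (balanced_mem L (n / 2) l hl ?_ (by omega))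
  cases e
  · have := hb_not false l
    rw [h0] at this; simpa using this
  · exact h0

theorem unbalanced (L : Bool → Language α) (n : ℕ) (e : Bool) (k : ℕ) :
    ∀ l : List (Bool × List α),
    (∀ b ∈ l, b.2 ∈ L b.1) → hb e l = -(k + 1) → l.length ≤ n →
    ∃ d r x y, l = d ++ r ++ x :: y ∧ x.1 = (!e) ∧ hb e d = 0 ∧ hb e y = 0 ∧
      fl r ∈ (L (!e) * KStar.kstar (SL (L true) (L false) (n / 2))) ^ k := by
  induction k with
  | zero =>
    intro l hl h hn
    obtain ⟨d, x, l', rfl, hd, hx, -⟩ := first_hit e l 0 le_rfl (by rw [h]; simp)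
    have hx' : x.1 = !e := by revert hx; cases x.1 <;> cases e <;> simp
    refine ⟨d, [], x, l', by simp, hx', by omega, ?_, rfl⟩
    rw [hb_append, hb_cons] at h
    simp only [hx, if_false] at h
    push_cast at h
    omega
  | succ k ih =>
    intro l hl h hn
    obtain ⟨d, x, l', rfl, hd, hx, -⟩ := first_hit e l 0 le_rfl (by rw [h]; push_cast; omega)
    have hx' : x.1 = !e := by revert hx; cases x.1 <;> cases e <;> simp
    rw [hb_append, hb_cons] at h
    simp only [hx, if_false] at h
    push_cast at h
    simp at hn
    obtain ⟨d', r, x', y, rfl, hxx, hdd, hy, hr⟩ := ih l' (fun b hb => hl b (by simp [hb]))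
      (by omega) (by omega)
    refine ⟨d, x :: d' ++ r, x', y, by simp, hxx, by omega, hy, ?_⟩
    rw [pow_succ']
    simp at hn
    have e1 := balanced_mem_star L n e d' (fun b hb => hl b (by simp [hb])) hdd (by omega)
    have e2 : x.2 ∈ L (!e) := hx' ▸ hl x (by simp)
    have := Language.append_mem_mul (Language.append_mem_mul e2 e1) hr
    simpa [fl_cons, fl_append] using this

/-- an unbalanced list of blocks can be rotated into `(L (!e) S^*)^(k+1)` -/
theorem unbalanced_rot (L : Bool → Language α) (n : ℕ) (e : Bool) (k : ℕ)
    (l : List (Bool × List α))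
    (hl : ∀ b ∈ l, b.2 ∈ L b.1) (h : hb e l = -(k + 1)) (hn : l.length ≤ n) :
    ∃ u v, fl l = u ++ v ∧
      v ++ u ∈ (L (!e) * KStar.kstar (SL (L true) (L false) (n / 2))) ^ (k + 1) := by
  obtain ⟨d, r, x, y, rfl, hx, hd, hy, hr⟩ := unbalanced L n e k l hl h hn
  refine ⟨fl d, fl (r ++ x :: y), by rw [← fl_append]; simp, ?_⟩
  simp at hn
  have e1 := balanced_mem_star L n e (y ++ d)
    (fun b hb => hl b (by simp at hb; rcases hb with hb | hb <;> simp [hb]))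
    (by rw [hb_append]; omega) (by simp; omega)
  have e2 : x.2 ∈ L (!e) := hx ▸ hl x (by simp)
  have := Language.append_mem_mul hr (Language.append_mem_mul e2 e1)
  rw [pow_succ]
  simpa [fl_cons, fl_append] using this

end blocks

/-- the two languages, indexed by sign -/
def LB : Bool → Language (Fin 3)
  | true => langP
  | false => langI

def LZ : Bool → Fin 3
  | true => 0
  | false => 1

theorem mem_cstar (w : List (Fin 3)) :
    w ∈ KStar.kstar ({[(2 : Fin 3)]} : Language (Fin 3)) ↔ ∃ m, w = List.replicate m 2 := by
  rw [Language.mem_kstar]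
  constructor
  · rintro ⟨L, rfl, h⟩
    induction L with
    | nil => exact ⟨0, rfl⟩
    | cons a L ih =>
      obtain ⟨m, hm⟩ := ih fun y hy => h y (by simp [hy])
      have : a = [2] := h a (by simp)
      exact ⟨m + 1, by simp [hm, this, List.replicate_succ]⟩
  · rintro ⟨m, rfl⟩
    refine ⟨List.replicate m [2], by simp, ?_⟩
    intro y hy
    exact List.eq_of_mem_replicate hy

theorem mem_LB (e : Bool) (w : List (Fin 3)) :
    w ∈ LB e ↔ ∃ a b, w = List.replicate a 2 ++ LZ e :: List.replicate b 2 := by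
  have : LB e = KStar.kstar ({[(2 : Fin 3)]} : Language (Fin 3)) *
      ({[LZ e]} : Language (Fin 3)) * KStar.kstar ({[(2 : Fin 3)]} : Language (Fin 3)) := by
    cases e <;> rfl
  rw [this]
  constructor
  · intro h
    obtain ⟨x, hx, y, hy, rfl⟩ := Language.mem_mul.1 h
    obtain ⟨x, hx', z, hz, rfl⟩ := Language.mem_mul.1 hx
    have hz : z = [LZ e] := hz
    obtain ⟨a, rfl⟩ := (mem_cstar _).1 hx'
    obtain ⟨b, rfl⟩ := (mem_cstar _).1 hy
    exact ⟨a, b, by simp [hz]⟩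
  · rintro ⟨a, b, rfl⟩
    have := Language.append_mem_mul (Language.append_mem_mul ((mem_cstar _).2 ⟨a, rfl⟩)
      (show [LZ e] ∈ ({[LZ e]} : Language (Fin 3)) from rfl)) ((mem_cstar _).2 ⟨b, rfl⟩)
    simpa using this

theorem ht_cons (z : Fin 3) (w : List (Fin 3)) : ht (z :: w) = sgn z + ht w := by simp [ht]
theorem ht_rep (m : ℕ) : ht (List.replicate m 2) = 0 := by simp [ht, sgn]

theorem ht_LB {e : Bool} {w : List (Fin 3)} (h : w ∈ LB e) : ht w = if e = true then 1 else -1 := by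
  obtain ⟨a, b, rfl⟩ := (mem_LB e w).1 h
  rw [ht_append, ht_cons, ht_rep, ht_rep]
  cases e <;> simp [LZ, sgn]

theorem ht_fl (l : List (Bool × List (Fin 3))) (hl : ∀ b ∈ l, b.2 ∈ LB b.1) :
    ht (fl l) = hb true l := by
  induction l with
  | nil => rfl
  | cons b l ih =>
    rw [fl_cons, ht_append, ih fun b hb => hl b (by simp [hb]), hb_cons, ht_LB (hl b (by simp))]

theorem blocks (w : List (Fin 3)) : (∃ m, w = List.replicate m 2) ∨
    ∃ l : List (Bool × List (Fin 3)), l ≠ [] ∧ (∀ b ∈ l, b.2 ∈ LB b.1) ∧ w = fl l ∧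
      l.length ≤ w.length := by
  induction w with
  | nil => exact Or.inl ⟨0, rfl⟩
  | cons z w ih =>
    have hz : z = 2 ∨ ∃ e, z = LZ e := by
      fin_cases z
      · exact Or.inr ⟨true, rfl⟩
      · exact Or.inr ⟨false, rfl⟩
      · exact Or.inl rfl
    rcases hz with rfl | ⟨e, rfl⟩
    · rcases ih with ⟨m, rfl⟩ | ⟨l, hne, hl, rfl, hlen⟩
      · exact Or.inl ⟨m + 1, rfl⟩
      · right
        match l, hne with
        | b :: l, _ =>
          refine ⟨(b.1, 2 :: b.2) :: l, by simp, ?_, by simp [fl_cons], by simp at hlen ⊢; omega⟩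
          intro c hc
          rcases List.mem_cons.1 hc with rfl | hc
          · obtain ⟨x, y, hxy⟩ := (mem_LB _ _).1 (hl b (by simp))
            refine (mem_LB _ _).2 ⟨x + 1, y, ?_⟩
            simp [hxy, List.replicate_succ]
          · exact hl c (by simp [hc])
    · right
      rcases ih with ⟨m, rfl⟩ | ⟨l, hne, hl, rfl, hlen⟩
      · refine ⟨[(e, LZ e :: List.replicate m 2)], by simp, ?_, by simp [fl], by simp⟩
        intro c hc
        rw [List.mem_singleton] at hc
        subst hc
        exact (mem_LB _ _).2 ⟨0, m, by simp⟩
      · refine ⟨(e, [LZ e]) :: l, by simp, ?_, by simp [fl_cons], by simpa using hlen⟩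
        intro c hc
        rcases List.mem_cons.1 hc with rfl | hc
        · exact (mem_LB _ _).2 ⟨0, 0, by simp⟩
        · exact hl c hc

theorem ht_SL (m : ℕ) : ∀ w ∈ SL langP langI m, ht w = 0 := by
  have hp : ∀ w ∈ langP, ht w = 1 := fun w hw => ht_LB (e := true) hw
  have hi : ∀ w ∈ langI, ht w = -1 := fun w hw => ht_LB (e := false) hw
  induction m with
  | zero => intro w hw; rw [SL, Language.mem_one] at hw; subst hw; rfl
  | succ m ih =>
    intro w hw
    rw [SL, Language.mem_add, Language.mem_add, Language.mem_one] at hw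
    rcases hw with (hw | hw) | rfl
    · obtain ⟨x, hx, y, hy, rfl⟩ := Language.mem_mul.1 hw
      obtain ⟨x, hx1, z, hz, rfl⟩ := Language.mem_mul.1 hx
      obtain ⟨x, hx2, t, ht, rfl⟩ := Language.mem_mul.1 hx1
      simp [ht_append, hp x hx2, ih t ht, ih z hz, hi y hy]
    · obtain ⟨x, hx, y, hy, rfl⟩ := Language.mem_mul.1 hw
      obtain ⟨x, hx1, z, hz, rfl⟩ := Language.mem_mul.1 hx
      obtain ⟨x, hx2, t, ht, rfl⟩ := Language.mem_mul.1 hx1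
      simp [ht_append, hi x hx2, ih t ht, ih z hz, hp y hy]
    · rfl

theorem ht_kstar {M : Language (Fin 3)} (h : ∀ w ∈ M, ht w = 0) :
    ∀ w ∈ KStar.kstar M, ht w = 0 := by
  intro w hw
  obtain ⟨L, rfl, hL⟩ := Language.mem_kstar.1 hw
  clear hw
  induction L with
  | nil => rfl
  | cons a L ih =>
    rw [List.flatten_cons, ht_append, h a (hL a (by simp)), ih fun y hy => hL y (by simp [hy])]
    rfl

theorem ht_pow {M : Language (Fin 3)} {c : ℤ} (h : ∀ w ∈ M, ht w = c) (k : ℕ) :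
    ∀ w ∈ M ^ k, ht w = k * c := by
  induction k with
  | zero => intro w hw; rw [pow_zero, Language.mem_one] at hw; subst hw; simp [ht]
  | succ k ih =>
    intro w hw
    rw [pow_succ'] at hw
    obtain ⟨x, hx, y, hy, rfl⟩ := Language.mem_mul.1 hw
    rw [ht_append, h x hx, ih y hy]
    push_cast; ring

theorem ht_LBS (e : Bool) (m : ℕ) : ∀ w ∈ LB e * KStar.kstar (SL langP langI m),
    ht w = if e = true then 1 else -1 := by
  intro w hw
  obtain ⟨x, hx, y, hy, rfl⟩ := Language.mem_mul.1 hw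
  rw [ht_append, ht_LB hx, ht_kstar (ht_SL m) y hy, add_zero]

/-- one half of the forward direction -/
theorem forward {n : ℕ} {P I C : MPMat n} {lam : ℝ} (h : InGamma (picMat P I C lam)) (e : Bool)
    (m : ℕ) : mcm (langMat (mu3 P I C) (LB e * KStar.kstar (SL langP langI m))) ≤
      ((if e = true then -lam else lam : ℝ) : EReal) := by
  rw [mcm_le]
  intro k hk hkn i
  rw [← langMat_pow]
  refine iSup₂_le fun w hw => ?_
  have hht := ht_pow (ht_LBS e m) k w hw
  have hk0 : (k : ℤ) ≠ 0 := by omega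
  have hne : w ≠ [] := by
    rintro rfl
    cases e <;> simp [ht] at hht <;> omega
  refine (pic_gamma_words h w hne i).trans (le_of_eq ?_)
  congr 1
  rw [hht]
  cases e <;> simp <;> ring

theorem wordMat_rep {n : ℕ} (P I C : MPMat n) (m : ℕ) :
    wordMat (mu3 P I C) (List.replicate m 2) = mpPow C m := by
  induction m with
  | zero => rfl
  | succ m ih => rw [List.replicate_succ, wordMat, ih]; rfl

theorem pump {n : ℕ} (f : Fin 3 → MPMat n) (w : List (Fin 3)) (i : Fin n) (r : ℝ)
    (h : (r : EReal) ≤ wordMat f w i i) (m : ℕ) :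
    ((m * r : ℝ) : EReal) ≤ wordMat f (List.replicate m w).flatten i i := by
  induction m with
  | zero => simp [wordMat, mpId]
  | succ m ih =>
    rw [List.replicate_succ, List.flatten_cons, wordMat_append]
    refine le_trans ?_ (le_mpMul _ _ i i i)
    refine le_trans (le_of_eq ?_) (add_le_add h ih)
    rw [← EReal.coe_add]; congr 1; push_cast; ring

theorem balanced_nonpos {n : ℕ} {P I C : MPMat n} (hP : ∀ i j, P i j ≠ ⊤) (hPd : ∀ j, P j j ≠ ⊥)
    {r : ℝ} {M : Language (Fin 3)}
    (h : mcm (langMat (mu3 P I C) (langP * KStar.kstar M)) ≤ (r : EReal))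
    {w : List (Fin 3)} (hw : w ∈ KStar.kstar M) (i : Fin n) :
    wordMat (mu3 P I C) w i i ≤ 0 := by
  by_contra hcon
  push Not at hcon
  obtain ⟨q, hq0, hq⟩ := EReal.lt_iff_exists_real_btwn.1 hcon
  have hq0 : 0 < q := by exact_mod_cast hq0
  have hn : 1 ≤ n := by have := i.2; omega
  have hb := (mcm_le _ r).1 h 1 le_rfl hn i
  have e1 : mpPow (langMat (mu3 P I C) (langP * KStar.kstar M)) 1 i i =
      langMat (mu3 P I C) (langP * KStar.kstar M) i i := by
    simp only [mpPow, mpMul_id]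
  rw [e1] at hb
  obtain ⟨m, hm⟩ := exists_nat_gt ((r - (P i i).toReal) / q)
  rw [div_lt_iff₀ hq0] at hm
  have hmem : [0] ++ (List.replicate m w).flatten ∈ langP * KStar.kstar M := by
    apply Language.append_mem_mul
    · exact (mem_LB true _).2 ⟨0, 0, rfl⟩
    · have : ∀ m, (List.replicate m w).flatten ∈ KStar.kstar M := by
        intro m
        induction m with
        | zero => exact Language.nil_mem_kstar _
        | succ m ih =>
          rw [List.replicate_succ, List.flatten_cons, ← kstar_mul_kstar]
          exact Language.append_mem_mul hw ih
      exact this m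
  have h1 := (le_langMat (mu3 P I C) _ hmem i i).trans hb
  rw [wordMat_append] at h1
  have h2 := (add_le_add (le_refl (wordMat (mu3 P I C) [0] i i))
    (pump (mu3 P I C) w i q hq.le m)).trans ((le_mpMul _ _ i i i).trans h1)
  have h3 : wordMat (mu3 P I C) [0] i i = P i i := by
    simp only [wordMat, mpMul_id]; rfl
  rw [h3, ← EReal.coe_toReal (hP i i) (hPd i), ← EReal.coe_add, EReal.coe_le_coe_iff] at h2
  push_cast at h2
  linarith

/-- one half of the backward direction -/
theorem backward {n : ℕ} {P I C : MPMat n} {lam : ℝ} (e : Bool)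
    (h : mcm (langMat (mu3 P I C) (LB (!e) * KStar.kstar (SL langP langI (n / 2)))) ≤
      ((if e = true then lam else -lam : ℝ) : EReal))
    (l : List (Bool × List (Fin 3))) (hl : ∀ b ∈ l, b.2 ∈ LB b.1) (hn : l.length ≤ n)
    (hneg : hb e l < 0) (i : Fin n) :
    wordMat (mu3 P I C) (fl l) i i ≤ ((-(lam * ht (fl l)) : ℝ) : EReal) := by
  obtain ⟨k, hk⟩ : ∃ k : ℕ, hb e l = -(k + 1) := ⟨(-(hb e l) - 1).toNat, by omega⟩
  have hlow : ∀ l : List (Bool × List (Fin 3)), -(l.length : ℤ) ≤ hb e l := by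
    intro l
    induction l with
    | nil => simp [hb_nil]
    | cons b l ih => rw [hb_cons]; push_cast [List.length_cons]; split_ifs <;> omega
  have hkn : k + 1 ≤ n := by have := hlow l; omega
  have hht : (ht (fl l) : ℝ) = if e = true then (-(k + 1) : ℝ) else k + 1 := by
    rw [ht_fl l hl]
    cases e
    · have := hb_not false l
      rw [hk] at this
      have h2 : hb true l = k + 1 := by simpa using this
      rw [h2]; simp
    · rw [hk]; simp
  obtain ⟨u, v, huv, hmem⟩ := unbalanced_rot LB n e k l hl hk hn
  have hfin : ∀ j, wordMat (mu3 P I C) (v ++ u) j j ≤ ((-(lam * ht (fl l)) : ℝ) : EReal) := by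
    intro j
    refine (le_langMat (mu3 P I C) _ hmem j j).trans ?_
    rw [langMat_pow]
    refine ((mcm_le _ _).1 h (k + 1) (by omega) hkn j).trans (le_of_eq ?_)
    congr 1
    rw [hht]
    cases e <;> simp <;> ring
  rw [huv] at hfin ⊢
  exact rotate_le _ u v _ hfin i

/-- with `𝒫 = {c}^*·{p}·{c}^*`, `ℐ = {c}^*·{i}·{c}^*` and
`S = S(𝒫, ℐ, ⌊n/2⌋)`, for real `λ`: `G(λP ⊕ λ⁻¹I ⊕ C) ∈ Γ` iff `G(C) ∈ Γ` and
`mcm(μ(ℐ·S^*)) ≤ λ ≤ -mcm(μ(𝒫·S^*))`. -/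
theorem stmt18 {n : ℕ} (P I C : MPMat n)
    (hP : ∀ i j, P i j ≠ ⊤) (hI : ∀ i j, I i j ≠ ⊤) (hC : ∀ i j, C i j ≠ ⊤)
    (hPd : ∀ j, P j j ≠ ⊥) (lam : ℝ) :
    InGamma (picMat P I C lam) ↔
      (InGamma C ∧
       mcm (langMat (mu3 P I C) (langI * KStar.kstar (SL langP langI (n / 2)))) ≤ (lam : EReal) ∧
       (lam : EReal) ≤ -mcm (langMat (mu3 P I C) (langP * KStar.kstar (SL langP langI (n / 2))))) := by
  constructor
  · intro h
    refine ⟨?_, ?_, ?_⟩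
    · intro i k hk
      have := pic_gamma_words h (List.replicate k 2) (by
        intro h0; have := congrArg List.length h0; simp at this; omega) i
      rw [wordMat_rep, ht_rep] at this
      simpa using this
    · simpa [LB] using forward h false (n / 2)
    · rw [EReal.le_neg, ← EReal.coe_neg]
      simpa [LB] using forward h true (n / 2)
  · rintro ⟨hG, h1, h2⟩
    rw [EReal.le_neg, ← EReal.coe_neg] at h2
    apply pic_gamma_of_words
    intro w hw hwn i
    rcases blocks w with ⟨m, rfl⟩ | ⟨l, hne, hl, rfl, hlen⟩
    · rw [wordMat_rep, ht_rep]
      have := hG i m (by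
        by_contra h0
        have : m = 0 := by omega
        subst this
        exact hw rfl)
      simpa using this
    · rcases lt_trichotomy (hb true l) 0 with hlt | heq | hgt
      · exact backward true (by simpa [LB] using h1) l hl (by omega) hlt i
      · have hm := balanced_mem_star LB n true l hl heq (by omega)
        have := balanced_nonpos hP hPd h2 hm i
        rw [ht_fl l hl, heq]
        simpa using this
      · refine backward false (by simpa [LB] using h2) l hl (by omega) ?_ i
        have := hb_not true l
        simp at this
        omega

end NCP
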